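/- Let p, q, r be real numbers with p, q, r ≥ 2 and 1/p + 1/q + 1/r < 1, let λ = λ(p,q,r), and let A, B be the associated SL(2,ℝ) matrices. Then the element C = B⁻¹A⁻¹ has trace tr(C) = 2cos(π/p)·cos(π/q) − (λ + λ⁻¹)·sin(π/p)·sin(π/q) = −2cos(π/r). -/

import Mathlib

open Real Matrix

/-- `E(p,q,r) = cos(π/r) + cos(π/p)·cos(π/q)`. -/
noncomputable def triE (p q r : ℝ) : ℝ :=
  Real.cos (π / r) + Real.cos (π / p) * Real.cos (π / q)

/-- `λ(p,q,r) = (E + √(E² − sin²(π/p)·sin²(π/q)))/(sin(π/p)·sin(π/q))`. -/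
noncomputable def triLambda (p q r : ℝ) : ℝ :=
  (triE p q r +
      Real.sqrt ((triE p q r) ^ 2 - (Real.sin (π / p)) ^ 2 * (Real.sin (π / q)) ^ 2)) /
    (Real.sin (π / p) * Real.sin (π / q))

/-- The matrix `A` associated to the `(p,q,r)`-triangle group. -/
noncomputable def triA (p : ℝ) : Matrix (Fin 2) (Fin 2) ℝ :=
  !![Real.cos (π / p), -Real.sin (π / p); Real.sin (π / p), Real.cos (π / p)]

/-- The matrix `B` associated to the `(p,q,r)`-triangle group. -/
noncomputable def triB (q lam : ℝ) : Matrix (Fin 2) (Fin 2) ℝ :=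
  !![Real.cos (π / q), -lam⁻¹ * Real.sin (π / q); lam * Real.sin (π / q), Real.cos (π / q)]

/-!
A `2 × 2` matrix of determinant one has the same trace as its inverse, and `C = (A * B)⁻¹`, so
`tr C = tr (A * B)`. Put `s = sin (π / p) * sin (π / q)`. Then `λ` and `λ⁻¹` are the two roots of
`s * t ^ 2 - 2 * E * t + s`, whence `(λ + λ⁻¹) * s = 2 * E`. These roots are real because
`E - s = cos (π / r) + cos (π / p + π / q)`, which is nonnegative as soon as
`π / p + π / q + π / r ≤ π`.
-/

section Trace

theorem trace_inv_fin_two {R : Type*} [CommRing R] (M : Matrix (Fin 2) (Fin 2) R) :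
    M⁻¹.trace = Ring.inverse M.det * M.trace := by
  rw [inv_def, trace_smul, adjugate_fin_two, trace_fin_two_of, trace_fin_two, smul_eq_mul,
    add_comm]

theorem det_triA (p : ℝ) : (triA p).det = 1 := by
  rw [triA, det_fin_two_of]
  linear_combination sin_sq_add_cos_sq (π / p)

theorem det_triB (q : ℝ) {l : ℝ} (hl : l ≠ 0) : (triB q l).det = 1 := by
  rw [triB, det_fin_two_of]
  linear_combination sin_sq_add_cos_sq (π / q) + sin (π / q) ^ 2 * inv_mul_cancel₀ hl

theorem trace_triA_mul_triB (p q l : ℝ) :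
    (triA p * triB q l).trace =
      2 * cos (π / p) * cos (π / q) - (l + l⁻¹) * (sin (π / p) * sin (π / q)) := by
  rw [triA, triB, mul_fin_two, trace_fin_two_of]
  ring

theorem trace_inv_triB_mul_inv_triA (p q : ℝ) {l : ℝ} (hl : l ≠ 0) :
    ((triB q l)⁻¹ * (triA p)⁻¹).trace =
      2 * cos (π / p) * cos (π / q) - (l + l⁻¹) * (sin (π / p) * sin (π / q)) := by
  have hdet : (triA p * triB q l).det = 1 := by rw [det_mul, det_triA, det_triB q hl, one_mul]
  rw [← Matrix.mul_inv_rev, trace_inv_fin_two, hdet, Ring.inverse_one, one_mul,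
    trace_triA_mul_triB]

end Trace

section Lambda

theorem add_sqrt_mul_sub_sqrt {x y : ℝ} (h : y ^ 2 ≤ x ^ 2) :
    (x + √(x ^ 2 - y ^ 2)) * (x - √(x ^ 2 - y ^ 2)) = y ^ 2 := by
  rw [← sq_sub_sq, sq_sqrt (sub_nonneg.2 h), sub_sub_cancel]

variable {p q r : ℝ}

theorem triLambda_ne_zero (hs : sin (π / p) * sin (π / q) ≠ 0)
    (hE : (sin (π / p) * sin (π / q)) ^ 2 ≤ triE p q r ^ 2) : triLambda p q r ≠ 0 := by
  have hprod := add_sqrt_mul_sub_sqrt hE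
  rw [triLambda, ← mul_pow]
  exact div_ne_zero (left_ne_zero_of_mul (hprod ▸ pow_ne_zero 2 hs)) hs

theorem inv_triLambda (hs : sin (π / p) * sin (π / q) ≠ 0)
    (hE : (sin (π / p) * sin (π / q)) ^ 2 ≤ triE p q r ^ 2) :
    (triLambda p q r)⁻¹ =
      (triE p q r - √(triE p q r ^ 2 - sin (π / p) ^ 2 * sin (π / q) ^ 2)) /
        (sin (π / p) * sin (π / q)) := by
  rw [triLambda, ← mul_pow]
  refine inv_eq_of_mul_eq_one_right ?_
  rw [div_mul_div_comm, add_sqrt_mul_sub_sqrt hE, ← sq, div_self (pow_ne_zero 2 hs)]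

theorem triLambda_add_inv_mul (hs : sin (π / p) * sin (π / q) ≠ 0)
    (hE : (sin (π / p) * sin (π / q)) ^ 2 ≤ triE p q r ^ 2) :
    (triLambda p q r + (triLambda p q r)⁻¹) * (sin (π / p) * sin (π / q)) = 2 * triE p q r := by
  rw [inv_triLambda hs hE, triLambda, ← add_div, div_mul_cancel₀ _ hs]
  ring

end Lambda

section Angles

theorem sin_mul_sin_le_cos_add_cos_mul_cos {α β γ : ℝ} (hαβ : 0 ≤ α + β) (hγ : 0 ≤ γ)
    (h : α + β + γ ≤ π) : sin α * sin β ≤ cos γ + cos α * cos β := by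
  have hcos : cos (π - (α + β)) ≤ cos γ :=
    cos_le_cos_of_nonneg_of_le_pi hγ (by linarith) (by linarith)
  rw [cos_pi_sub, cos_add] at hcos
  linarith

theorem sin_pi_div_pos {x : ℝ} (hx : 1 < x) : 0 < sin (π / x) :=
  sin_pos_of_pos_of_lt_pi (by positivity) (div_lt_self pi_pos hx)

variable {p q r : ℝ}

theorem sin_mul_sin_le_triE (hp : 0 < p) (hq : 0 < q) (hr : 0 < r)
    (h : 1 / p + 1 / q + 1 / r ≤ 1) : sin (π / p) * sin (π / q) ≤ triE p q r := by
  refine sin_mul_sin_le_cos_add_cos_mul_cos (by positivity) (by positivity) ?_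
  calc
    π / p + π / q + π / r = π * (1 / p + 1 / q + 1 / r) := by ring
    _ ≤ π := mul_le_of_le_one_right pi_pos.le h

end Angles

theorem stmt_3_general {p q r : ℝ} (hp : 0 < p) (hq : 0 < q) (hr : 0 < r)
    (h : 1 / p + 1 / q + 1 / r ≤ 1) :
    ((triB q (triLambda p q r))⁻¹ * (triA p)⁻¹).trace =
        2 * cos (π / p) * cos (π / q) -
          (triLambda p q r + (triLambda p q r)⁻¹) * (sin (π / p) * sin (π / q)) ∧
      ((triB q (triLambda p q r))⁻¹ * (triA p)⁻¹).trace = -2 * cos (π / r) := by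
  have hp' : 0 < 1 / p := one_div_pos.2 hp
  have hq' : 0 < 1 / q := one_div_pos.2 hq
  have hr' : 0 < 1 / r := one_div_pos.2 hr
  have hp_one : 1 < p := (div_lt_one hp).1 (by linarith)
  have hq_one : 1 < q := (div_lt_one hq).1 (by linarith)
  have hs : 0 < sin (π / p) * sin (π / q) := mul_pos (sin_pi_div_pos hp_one) (sin_pi_div_pos hq_one)
  have hE : (sin (π / p) * sin (π / q)) ^ 2 ≤ triE p q r ^ 2 :=
    pow_le_pow_left₀ hs.le (sin_mul_sin_le_triE hp hq hr h) 2
  have htrace := trace_inv_triB_mul_inv_triA p q (triLambda_ne_zero hs.ne' hE)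
  refine ⟨htrace, ?_⟩
  rw [htrace, triLambda_add_inv_mul hs.ne' hE, triE]
  ring

theorem stmt_3 (p q r : ℝ) (hp : 2 ≤ p) (hq : 2 ≤ q) (hr : 2 ≤ r)
    (h : 1 / p + 1 / q + 1 / r < 1) :
    ((triB q (triLambda p q r))⁻¹ * (triA p)⁻¹).trace =
        2 * Real.cos (π / p) * Real.cos (π / q) -
          (triLambda p q r + (triLambda p q r)⁻¹) * (Real.sin (π / p) * Real.sin (π / q)) ∧
      ((triB q (triLambda p q r))⁻¹ * (triA p)⁻¹).trace = -2 * Real.cos (π / r) :=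
  stmt_3_general (by linarith) (by linarith) (by linarith) h.le
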